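/- Let (p₀,q₀) ∈ U be a non-T-resonant zero of F. Then (p₀,q₀), regarded as the trivial T-periodic pair (0,(p̄₀,q̄₀)), is an ejecting point for the set X ⊆ [0,∞) × C_T(U) of T-periodic pairs of the DAE: the singleton {(p̄₀,q̄₀)} is relatively open in the slice X₀ := {(x,y) ∈ C_T(U) : (0,(x,y)) ∈ X}, and there exists a connected subset of X which meets (0,(p̄₀,q̄₀)) and is not included in {0} × X₀. -/

import Mathlib

/-!
Near `z₀ = (p₀, q₀)` the constraint `g = 0` is the graph `G x = (x, ψ x)` of a `C¹` map `ψ`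
(`exists_graphMap`), so that the `T`-periodic solutions of the DAE near `z₀` are the curves `G ∘ x`
with `x` a `T`-periodic solution near `p₀` of the ordinary equation
`ẋ = a(t) f(G x) + λ h(t, G x)`. The linearization of `f ∘ G` at `p₀` is `Φ(p₀, q₀)`.

Non-`T`-resonance says that the linear equation `ẇ = a(t) Φ w + b(t)` has, for each continuous
`T`-periodic `b`, exactly one `T`-periodic solution, and that this solution is bounded by a multiple
of `sup ‖b‖` (`exists_green`). With `w = x - p₀`, the ordinary equation becomes a fixed point
problem for this solution operator. Since `f ∘ G - Φ` has small Lipschitz constant near `p₀` and `h`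
is locally Lipschitz, uniformly in time by compactness of a period (`exists_uniform_lipschitz`), it
is a contraction on a small ball for `λ ∈ [0, δ]` (`exists_branch`). Uniqueness of the fixed point
at `λ = 0` shows that the constant solution is isolated, and the fixed points for `λ ∈ [0, δ]` form
an arc of `T`-periodic pairs that starts at `(0, z₀)` and leaves the slice `λ = 0`. No topological
degree is needed, because `h` is Lipschitz.
-/

/-- `u : ℝ →ᵇ ℝᵏ×ℝˢ` is a `T`-periodic solution of the DAE
`ẋ = a(t)f(x,y) + λh(t,x,y)`, `g(x,y) = 0`, corresponding to the parameter `lam`. -/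
def IsTPSol {k s : ℕ} (U : Set ((Fin k → ℝ) × (Fin s → ℝ)))
    (g : (Fin k → ℝ) × (Fin s → ℝ) → (Fin s → ℝ))
    (f : (Fin k → ℝ) × (Fin s → ℝ) → (Fin k → ℝ))
    (a : ℝ → ℝ) (h : ℝ × ((Fin k → ℝ) × (Fin s → ℝ)) → (Fin k → ℝ))
    (T lam : ℝ)
    (u : BoundedContinuousFunction ℝ ((Fin k → ℝ) × (Fin s → ℝ))) : Prop :=
  Function.Periodic (fun t => u t) T ∧ (∀ t : ℝ, u t ∈ U) ∧
  ∃ u' : ℝ → (Fin k → ℝ) × (Fin s → ℝ), Continuous u' ∧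
    (∀ t : ℝ, HasDerivAt (fun τ => u τ) (u' t) t) ∧
    ∀ t : ℝ, (u' t).1 = a t • f (u t) + lam • h (t, u t) ∧ g (u t) = 0

/-- The set of `T`-periodic pairs `(λ,(x,y))` of the DAE, inside
`ℝ × C_T(ℝᵏ×ℝˢ)` (the latter modelled by bounded continuous functions). -/
def TPairs {k s : ℕ} (U : Set ((Fin k → ℝ) × (Fin s → ℝ)))
    (g : (Fin k → ℝ) × (Fin s → ℝ) → (Fin s → ℝ))
    (f : (Fin k → ℝ) × (Fin s → ℝ) → (Fin k → ℝ))
    (a : ℝ → ℝ) (h : ℝ × ((Fin k → ℝ) × (Fin s → ℝ)) → (Fin k → ℝ))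
    (T : ℝ) :
    Set (ℝ × BoundedContinuousFunction ℝ ((Fin k → ℝ) × (Fin s → ℝ))) :=
  {P | 0 ≤ P.1 ∧ IsTPSol U g f a h T P.1 P.2}

/-- Partial differential with respect to the first group of variables. -/
noncomputable def pd1 {k s m : ℕ}
    (g : (Fin k → ℝ) × (Fin s → ℝ) → (Fin m → ℝ))
    (z : (Fin k → ℝ) × (Fin s → ℝ)) :
    (Fin k → ℝ) →L[ℝ] (Fin m → ℝ) :=
  (fderiv ℝ g z).comp (ContinuousLinearMap.inl ℝ (Fin k → ℝ) (Fin s → ℝ))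

/-- Partial differential with respect to the second group of variables. -/
noncomputable def pd2 {k s m : ℕ}
    (g : (Fin k → ℝ) × (Fin s → ℝ) → (Fin m → ℝ))
    (z : (Fin k → ℝ) × (Fin s → ℝ)) :
    (Fin s → ℝ) →L[ℝ] (Fin m → ℝ) :=
  (fderiv ℝ g z).comp (ContinuousLinearMap.inr ℝ (Fin k → ℝ) (Fin s → ℝ))

/-- The linearization `Φ(p,q) = ∂₁f − ∂₂f [∂₂g]⁻¹ ∂₁g` at a point. -/
noncomputable def PhiMap {k s : ℕ}
    (f : (Fin k → ℝ) × (Fin s → ℝ) → (Fin k → ℝ))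
    (g : (Fin k → ℝ) × (Fin s → ℝ) → (Fin s → ℝ))
    (z : (Fin k → ℝ) × (Fin s → ℝ)) :
    (Fin k → ℝ) →L[ℝ] (Fin k → ℝ) :=
  pd1 f z - (pd2 f z).comp ((Ring.inverse (pd2 g z)).comp (pd1 g z))

/-! ### The linear equation with periodic forcing -/

section LinearPart

variable {E : Type*} [NormedAddCommGroup E] [NormedSpace ℝ E]

/-- Variation of constants: in the moving frame `Q`, the linear terms of `ẇ = a(t) A w + b`
cancel. -/
lemma hasDerivAt_movingFrame {A : E →L[ℝ] E} {a : ℝ → ℝ} {Q : ℝ → E →L[ℝ] E}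
    (hQ : ∀ t, HasDerivAt Q (-(a t • (Q t * A))) t) {w b : ℝ → E} {t : ℝ}
    (hw : HasDerivAt w (a t • A (w t) + b t) t) :
    HasDerivAt (fun t => Q t (w t)) (Q t (b t)) t := by
  have := (hQ t).clm_apply hw
  convert! this using 1
  simp

variable [CompleteSpace E]

/-- The propagator `P` of `ẇ = a(t) A w`, together with its inverse `Q`. Since the matrices `a(t) A`
commute, `P t = exp (α(t) A)` with `α(t) = ∫₀ᵗ a`. -/
lemma exists_propagator (A : E →L[ℝ] E) (a : ℝ → ℝ) (ha : Continuous a) :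
    ∃ P Q : ℝ → E →L[ℝ] E,
      (∀ t, HasDerivAt P (a t • (A * P t)) t) ∧ (∀ t, HasDerivAt Q (-(a t • (Q t * A))) t) ∧
      (∀ t, P t * Q t = 1) ∧ (∀ t, Q t * P t = 1) ∧ P 0 = 1 ∧ Q 0 = 1 := by
  have hα : ∀ t, HasDerivAt (fun t => ∫ s in (0:ℝ)..t, a s) (a t) t := fun t =>
    intervalIntegral.integral_hasDerivAt_right (ha.intervalIntegrable _ _)
      (ha.stronglyMeasurableAtFilter _ _) ha.continuousAt
  have hinv : ∀ r : ℝ, NormedSpace.exp (r • A) * NormedSpace.exp ((-r) • A) = 1 := by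
    intro r
    have : NormedAlgebra ℚ (E →L[ℝ] E) := .restrictScalars ℚ ℝ _
    have := NormedSpace.invertibleExp (r • A)
    rw [neg_smul, ← NormedSpace.invOf_exp, mul_invOf_self]
  refine ⟨fun t => NormedSpace.exp ((∫ s in (0:ℝ)..t, a s) • A),
    fun t => NormedSpace.exp ((-∫ s in (0:ℝ)..t, a s) • A), ?_, ?_, ?_, ?_, ?_, ?_⟩
  · intro t
    exact (hasDerivAt_exp_smul_const' A (∫ s in (0:ℝ)..t, a s)).scomp t (hα t)
  · intro t
    have := (hasDerivAt_exp_smul_const A (-∫ s in (0:ℝ)..t, a s)).scomp t (hα t).neg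
    rw [neg_smul] at this
    exact this
  · intro t; exact hinv _
  · intro t
    have := hinv (-∫ s in (0:ℝ)..t, a s)
    rwa [neg_neg] at this
  · simp
  · simp

lemma eq_zero_of_homogeneous {A : E →L[ℝ] E} {a : ℝ → ℝ} (ha : Continuous a) {w : ℝ → E}
    (hw : ∀ t, HasDerivAt w (a t • A (w t)) t) (h0 : w 0 = 0) (t : ℝ) : w t = 0 := by
  obtain ⟨P, Q, -, hQ, hPQ, -, -, -⟩ := exists_propagator A a ha
  have hd : ∀ t, HasDerivAt (fun t => Q t (w t)) 0 t := fun t => by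
    simpa using hasDerivAt_movingFrame hQ (b := fun _ => 0) (by simpa using hw t)
  have hc : Q t (w t) = Q 0 (w 0) :=
    is_const_of_deriv_eq_zero (fun t => (hd t).differentiableAt) (fun t => (hd t).deriv) t 0
  rw [h0, map_zero] at hc
  have := congrArg (P t) hc
  rwa [← mul_apply_eq_comp, hPQ, map_zero] at this

/-- A solution of a linear equation with `T`-periodic data is `T`-periodic as soon as it takes the
same value at `0` and at `T`. -/
lemma periodic_of_endpoints {A : E →L[ℝ] E} {a : ℝ → ℝ} (ha : Continuous a) {T : ℝ}
    (haT : Function.Periodic a T) {w b : ℝ → E} (hb : Function.Periodic b T)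
    (hw : ∀ t, HasDerivAt w (a t • A (w t) + b t) t) (h0 : w T = w 0) :
    Function.Periodic w T := by
  intro t
  have hd : ∀ t, HasDerivAt (fun t => w (t + T) - w t) (a t • A (w (t + T) - w t)) t := by
    intro t
    have h1 : HasDerivAt (fun t => w (t + T)) (a (t + T) • A (w (t + T)) + b (t + T)) t :=
      (hw (t + T)).comp_add_const t T
    rw [haT, hb] at h1
    convert! h1.sub (hw t) using 1
    rw [map_sub, smul_sub]; abel
  exact sub_eq_zero.mp (eq_zero_of_homogeneous ha hd (by simp [h0]) t)

/-- Without nonzero `T`-periodic solutions of `ξ̇ = a(t) A ξ`, the forced equation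
`ẇ = a(t) A w + b` has a `T`-periodic solution for every continuous `T`-periodic `b`, and every
such solution is bounded by a fixed multiple of `sup ‖b‖`. By linearity the bound also says that the
periodic solution is unique and depends on `b` in a Lipschitz way. -/
lemma exists_green [FiniteDimensional ℝ E] (A : E →L[ℝ] E) (a : ℝ → ℝ) (ha : Continuous a) {T : ℝ}
    (hT : 0 < T) (haT : Function.Periodic a T)
    (hres : ¬ ∃ ξ : ℝ → E, (∀ t, HasDerivAt ξ (a t • A (ξ t)) t) ∧ Function.Periodic ξ T ∧ ξ ≠ 0) :
    ∃ C > (0:ℝ),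
      (∀ b : ℝ → E, Continuous b → Function.Periodic b T →
        ∃ w : ℝ → E, Function.Periodic w T ∧ ∀ t, HasDerivAt w (a t • A (w t) + b t) t) ∧
      (∀ (w b : ℝ → E) (M : ℝ), Function.Periodic w T →
        (∀ t, HasDerivAt w (a t • A (w t) + b t) t) → (∀ t, ‖b t‖ ≤ M) → ∀ t, ‖w t‖ ≤ C * M) := by
  obtain ⟨P, Q, hP, hQ, hPQ, hQP, hP0, hQ0⟩ := exists_propagator A a ha
  have hPc : Continuous P := continuous_iff_continuousAt.2 fun t => (hP t).continuousAt
  have hQc : Continuous Q := continuous_iff_continuousAt.2 fun t => (hQ t).continuousAt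
  have hPQa : ∀ t v, P t (Q t v) = v := fun t v => by
    rw [← mul_apply_eq_comp, hPQ]; rfl
  have hQPa : ∀ t v, Q t (P t v) = v := fun t v => by
    rw [← mul_apply_eq_comp, hQP]; rfl
  have hQ0a : ∀ v, Q 0 v = v := fun v => by rw [hQ0]; rfl
  have hP0a : ∀ v, P 0 v = v := fun v => by rw [hP0]; rfl
  -- A fixed vector `v` of `Q T` is fixed by `P T`, so `P t v` would be a periodic solution.
  have hinj : Function.Injective (Q T - 1 : E →L[ℝ] E) := by
    rw [injective_iff_map_eq_zero]
    intro v hv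
    by_contra hne
    refine hres ⟨fun t => P t v, fun t => ?_, ?_, fun h => hne ?_⟩
    · simpa using (hP t).clm_apply (hasDerivAt_const t v)
    · refine periodic_of_endpoints (A := A) (b := fun _ => 0) ha haT (fun _ => rfl) (fun t => ?_) ?_
      · simpa using (hP t).clm_apply (hasDerivAt_const t v)
      · have h1 : Q T v = v := sub_eq_zero.mp hv
        show P T v = P 0 v
        rw [hP0a]
        nth_rewrite 1 [← h1]
        exact hPQa T v
    · have := congrFun h 0
      simpa [hP0a] using this
  obtain ⟨κ, hκ, hanti⟩ := (LinearMap.injective_iff_antilipschitz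
    ((Q T - 1 : E →L[ℝ] E) : E →ₗ[ℝ] E)).1 hinj
  have hsurj : Function.Surjective ((Q T - 1 : E →L[ℝ] E) : E →ₗ[ℝ] E) :=
    LinearMap.injective_iff_surjective.1 hinj
  obtain ⟨mP, hmP⟩ := (isCompact_Icc (a := (0:ℝ)) (b := T)).exists_bound_of_continuousOn
    hPc.continuousOn
  obtain ⟨mQ, hmQ⟩ := (isCompact_Icc (a := (0:ℝ)) (b := T)).exists_bound_of_continuousOn
    hQc.continuousOn
  have h0T : (0:ℝ) ∈ Set.Icc 0 T := ⟨le_rfl, hT.le⟩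
  have hTT : T ∈ Set.Icc 0 T := ⟨hT.le, le_rfl⟩
  have hmP0 : 0 ≤ mP := (norm_nonneg _).trans (hmP 0 h0T)
  have hmQ0 : 0 ≤ mQ := (norm_nonneg _).trans (hmQ 0 h0T)
  refine ⟨mP * (κ * (mQ * T) + mQ * T) + 1, by positivity, ?_, ?_⟩
  · intro b hb hbT
    have hQb : Continuous fun t => Q t (b t) := hQc.clm_apply hb
    set J : ℝ → E := fun t => ∫ s in (0:ℝ)..t, Q s (b s) with hJ
    have hJd : ∀ t, HasDerivAt J (Q t (b t)) t := fun t =>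
      intervalIntegral.integral_hasDerivAt_right (hQb.intervalIntegrable _ _)
        (hQb.stronglyMeasurableAtFilter _ _) hQb.continuousAt
    have hJ0 : J 0 = 0 := by simp [hJ]
    -- The initial value `c` is chosen so that `P T (c + J T) = c`.
    obtain ⟨c, hc⟩ := hsurj (J T)
    have hc' : Q T c = c + J T := by
      have : Q T c - c = J T := hc
      rw [← this]; abel
    have hw : ∀ t, HasDerivAt (fun t => P t (c + J t)) (a t • A (P t (c + J t)) + b t) t := by
      intro t
      convert! (hP t).clm_apply ((hJd t).const_add c) using 1
      simp [hPQa]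
    refine ⟨fun t => P t (c + J t), periodic_of_endpoints ha haT hbT hw ?_, hw⟩
    show P T (c + J T) = P 0 (c + J 0)
    rw [← hc', hPQa, hP0a, hJ0, add_zero]
  · intro w b M hwT hw hbM
    have hM : 0 ≤ M := (norm_nonneg _).trans (hbM 0)
    have hv : ∀ t ∈ Set.Icc 0 T, ‖Q t (w t) - w 0‖ ≤ mQ * M * T := by
      intro t ht
      have h1 := norm_image_sub_le_of_norm_deriv_le_segment' (a := 0) (b := T) (C := mQ * M)
        (f := fun t => Q t (w t)) (f' := fun t => Q t (b t))
        (fun t _ => (hasDerivAt_movingFrame hQ (hw t)).hasDerivWithinAt)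
        (fun t ht => ((Q t).le_opNorm _).trans
          (mul_le_mul (hmQ t ⟨ht.1, ht.2.le⟩) (hbM t) (norm_nonneg _) hmQ0)) t ht
      simp only [hQ0a, sub_zero] at h1
      exact h1.trans (mul_le_mul_of_nonneg_left ht.2 (by positivity))
    have hw0 : ‖w 0‖ ≤ κ * (mQ * M * T) := by
      have h1 := hanti.le_mul_norm (by simp) (w 0)
      have h2 := hv T hTT
      have h3 : w T = w 0 := by simpa using hwT 0
      rw [h3] at h2
      exact h1.trans (mul_le_mul_of_nonneg_left h2 κ.2)
    have hmain : ∀ t ∈ Set.Icc 0 T, ‖w t‖ ≤ (mP * (κ * (mQ * T) + mQ * T) + 1) * M := by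
      intro t ht
      have h1 : ‖Q t (w t)‖ ≤ κ * (mQ * M * T) + mQ * M * T := by
        have := norm_add_le (w 0) (Q t (w t) - w 0)
        rw [add_sub_cancel] at this
        linarith [hv t ht]
      calc ‖w t‖ = ‖P t (Q t (w t))‖ := by rw [hPQa]
        _ ≤ mP * (κ * (mQ * M * T) + mQ * M * T) :=
          ((P t).le_opNorm _).trans (mul_le_mul (hmP t ht) h1 (norm_nonneg _) hmP0)
        _ ≤ _ := by nlinarith
    intro t
    obtain ⟨y, hy, hty⟩ := hwT.exists_mem_Ico₀ hT t
    rw [hty]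
    exact hmain y ⟨hy.1, hy.2.le⟩

end LinearPart

/-! ### The contraction argument -/

section Branch

open Set Metric

variable {E : Type*} [NormedAddCommGroup E] [NormedSpace ℝ E] [CompleteSpace E]

/-- The equation `ẇ = a(t)(A w + R w) + lam H(t, w)`, with `R` having arbitrarily small Lipschitz
constant near `0` and `A` nonresonant, has near `w = 0` only the zero `T`-periodic solution for
`lam = 0`, and a `T`-periodic solution `c lam` depending in a Lipschitz way on `lam ∈ [0, δ]`. It is
the fixed point of the contraction sending `x` to the `T`-periodic solution of
`ẇ = a(t) A w + (a(t) R(x) + lam H(t, x))`. -/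
lemma exists_branch [FiniteDimensional ℝ E] (A : E →L[ℝ] E) (a : ℝ → ℝ) (ha : Continuous a) {T : ℝ}
    (hT : 0 < T) (haT : Function.Periodic a T)
    (hres : ¬ ∃ ξ : ℝ → E, (∀ t, HasDerivAt ξ (a t • A (ξ t)) t) ∧ Function.Periodic ξ T ∧ ξ ≠ 0)
    (R : E → E) (hR0 : R 0 = 0)
    (hR : ∀ ε > (0:ℝ), ∃ ρ > (0:ℝ), ∀ x y, ‖x‖ ≤ ρ → ‖y‖ ≤ ρ → ‖R x - R y‖ ≤ ε * ‖x - y‖)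
    (H : ℝ → E → E) {ρ₀ K M : ℝ} (hρ₀ : 0 < ρ₀) (hK : 0 ≤ K)
    (hHc : ContinuousOn (fun p : ℝ × E => H p.1 p.2) (univ ×ˢ closedBall 0 ρ₀))
    (hHT : ∀ t x, ‖x‖ ≤ ρ₀ → H (t + T) x = H t x)
    (hHK : ∀ t x y, ‖x‖ ≤ ρ₀ → ‖y‖ ≤ ρ₀ → ‖H t x - H t y‖ ≤ K * ‖x - y‖)
    (hHM : ∀ t, ‖H t 0‖ ≤ M) :
    ∃ r > (0:ℝ), r ≤ ρ₀ ∧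
      (∀ x : ℝ → E, Function.Periodic x T → (∀ t, ‖x t‖ ≤ r) →
        (∀ t, HasDerivAt x (a t • (A (x t) + R (x t))) t) → ∀ t, x t = 0) ∧
      ∃ δ > (0:ℝ), ∃ L : ℝ, 0 ≤ L ∧ ∃ c : ℝ → ℝ → E,
        (∀ lam ∈ Icc 0 δ, Function.Periodic (c lam) T ∧ (∀ t, ‖c lam t‖ ≤ r) ∧
          ∀ t, HasDerivAt (c lam)
            (a t • (A (c lam t) + R (c lam t)) + lam • H t (c lam t)) t) ∧
        ∀ lam ∈ Icc 0 δ, ∀ mu ∈ Icc 0 δ, ∀ t, ‖c lam t - c mu t‖ ≤ L * |lam - mu| := by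
  obtain ⟨C, hC, hex, hbd⟩ := exists_green A a ha hT haT hres
  have hM : 0 ≤ M := (norm_nonneg _).trans (hHM 0)
  obtain ⟨m, hm⟩ : ∃ m, ∀ t, |a t| ≤ m := by
    obtain ⟨m, hm⟩ := (isCompact_Icc (a := (0:ℝ)) (b := T)).exists_bound_of_continuousOn
      ha.continuousOn
    refine ⟨m, fun t => ?_⟩
    obtain ⟨y, hy, hty⟩ := haT.exists_mem_Ico₀ hT t
    rw [hty]
    exact hm y ⟨hy.1, hy.2.le⟩
  have hm0 : 0 ≤ m := (abs_nonneg _).trans (hm 0)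
  obtain ⟨ρ, hρ, hRρ⟩ := hR (1 / (4 * C * (m + 1))) (by positivity)
  set ε := 1 / (4 * C * (m + 1)) with hε
  have hε0 : 0 < ε := by positivity
  have hCε : C * (m * ε) ≤ 1 / 4 := by
    rw [hε, show C * (m * (1 / (4 * C * (m + 1)))) = m / (m + 1) / 4 by field_simp]
    have : m / (m + 1) ≤ 1 := (div_le_one (by positivity)).2 (by linarith)
    linarith
  set r := min ρ ρ₀ with hr
  have hr0 : 0 < r := lt_min hρ hρ₀
  have hrρ : r ≤ ρ := min_le_left _ _
  have hrρ₀ : r ≤ ρ₀ := min_le_right _ _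
  set δ := min (1 / (4 * C * (K + 1))) (r / (2 * C * (M + K * r + 1))) with hδ
  have hδ0 : 0 < δ := lt_min (by positivity) (by positivity)
  have hCK : ∀ lam ∈ Icc 0 δ, C * (lam * K) ≤ 1 / 4 := by
    intro lam hl
    have h1 : lam ≤ 1 / (4 * C * (K + 1)) := hl.2.trans (min_le_left _ _)
    rw [le_div_iff₀ (by positivity)] at h1
    nlinarith [mul_nonneg hC.le hl.1]
  have hCM : ∀ lam ∈ Icc 0 δ, C * (lam * (M + K * r)) ≤ r / 2 := by
    intro lam hl
    have h1 : lam ≤ r / (2 * C * (M + K * r + 1)) := hl.2.trans (min_le_right _ _)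
    rw [le_div_iff₀ (by positivity)] at h1
    nlinarith [mul_nonneg hC.le hl.1]
  set b : ℝ → ℝ → E → E := fun lam t x => a t • R x + lam • H t x with hb
  have hHr : ∀ t x, ‖x‖ ≤ r → ‖H t x‖ ≤ M + K * r := by
    intro t x hx
    have h1 := hHK t x 0 (hx.trans hrρ₀) (by simpa using hρ₀.le)
    rw [sub_zero] at h1
    have h2 : H t x = H t 0 + (H t x - H t 0) := by abel
    rw [h2]
    exact (norm_add_le _ _).trans
      (add_le_add (hHM t) (h1.trans (mul_le_mul_of_nonneg_left hx hK)))
  have hbdiff : ∀ lam ∈ Icc 0 δ, ∀ mu ∈ Icc 0 δ, ∀ t x y, ‖x‖ ≤ r → ‖y‖ ≤ r →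
      ‖b lam t x - b mu t y‖ ≤ (m * ε + lam * K) * ‖x - y‖ + |lam - mu| * (M + K * r) := by
    intro lam hl mu _ t x y hx hy
    have h1 : b lam t x - b mu t y
        = a t • (R x - R y) + lam • (H t x - H t y) + (lam - mu) • H t y := by
      simp only [hb, smul_sub, sub_smul]; abel
    rw [h1]
    refine norm_add₃_le.trans ?_
    rw [norm_smul, norm_smul, norm_smul, Real.norm_eq_abs, Real.norm_eq_abs, Real.norm_eq_abs,
      abs_of_nonneg hl.1]
    have e1 : |a t| * ‖R x - R y‖ ≤ m * (ε * ‖x - y‖) :=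
      mul_le_mul (hm t) (hRρ x y (hx.trans hrρ) (hy.trans hrρ)) (norm_nonneg _) hm0
    have e2 : lam * ‖H t x - H t y‖ ≤ lam * (K * ‖x - y‖) :=
      mul_le_mul_of_nonneg_left (hHK t x y (hx.trans hrρ₀) (hy.trans hrρ₀)) hl.1
    have e3 : |lam - mu| * ‖H t y‖ ≤ |lam - mu| * (M + K * r) :=
      mul_le_mul_of_nonneg_left (hHr t y hy) (abs_nonneg _)
    linarith
  -- The contraction estimate, jointly in the parameter and in the argument.
  have hdiff : ∀ lam ∈ Icc 0 δ, ∀ mu ∈ Icc 0 δ, ∀ (x y w v : ℝ → E) (D : ℝ),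
      (∀ t, ‖x t‖ ≤ r) → (∀ t, ‖y t‖ ≤ r) → (∀ t, ‖x t - y t‖ ≤ D) →
      Function.Periodic w T → Function.Periodic v T →
      (∀ t, HasDerivAt w (a t • A (w t) + b lam t (x t)) t) →
      (∀ t, HasDerivAt v (a t • A (v t) + b mu t (y t)) t) →
      ∀ t, ‖w t - v t‖ ≤ D / 2 + C * (|lam - mu| * (M + K * r)) := by
    intro lam hl mu hmu x y w v D hx hy hD hwT hvT hw hv t
    have hD0 : 0 ≤ D := (norm_nonneg _).trans (hD 0)
    have h1 := hbd (fun t => w t - v t) (fun t => b lam t (x t) - b mu t (y t))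
      ((m * ε + lam * K) * D + |lam - mu| * (M + K * r))
      (fun t => by simp only [hwT t, hvT t])
      (fun t => by
        convert! (hw t).sub (hv t) using 1
        rw [map_sub, smul_sub]; abel)
      (fun t => (hbdiff lam hl mu hmu t (x t) (y t) (hx t) (hy t)).trans
        (add_le_add_left (mul_le_mul_of_nonneg_left (hD t)
          (add_nonneg (by positivity) (mul_nonneg hl.1 hK))) _)) t
    refine h1.trans ?_
    nlinarith [hCK lam hl]
  have hRcont : ContinuousOn R (closedBall 0 r) := by
    refine LipschitzOnWith.continuousOn (K := ε.toNNReal) (.of_dist_le_mul fun x hx y hy => ?_)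
    rw [mem_closedBall_zero_iff] at hx hy
    rw [dist_eq_norm, dist_eq_norm, Real.coe_toNNReal _ hε0.le]
    exact hRρ x y (hx.trans hrρ) (hy.trans hrρ)
  have hbcont : ∀ lam (x : ℝ → E), Continuous x → (∀ t, ‖x t‖ ≤ r) →
      Continuous fun t => b lam t (x t) := by
    intro lam x hxc hx
    refine (ha.smul (hRcont.comp_continuous hxc fun t => by simpa using hx t)).add
      (continuous_const.smul ?_)
    exact hHc.comp_continuous (continuous_id.prodMk hxc)
      fun t => ⟨mem_univ _, by simpa using (hx t).trans hrρ₀⟩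
  have hbper : ∀ lam (x : ℝ → E), Function.Periodic x T → (∀ t, ‖x t‖ ≤ r) →
      Function.Periodic (fun t => b lam t (x t)) T := by
    intro lam x hxT hx t
    simp only [hb, haT t, hxT t, hHT t _ ((hx t).trans hrρ₀)]
  have h0mem : (0:ℝ) ∈ Icc 0 δ := ⟨le_rfl, hδ0.le⟩
  have hzero : ∀ t, HasDerivAt (fun _ : ℝ => (0:E)) (a t • A 0 + b 0 t 0) t := fun t => by
    simpa [hb, hR0] using hasDerivAt_const t (0:E)
  set S : Set (BoundedContinuousFunction ℝ E) :=
    {w | Function.Periodic (fun t => w t) T ∧ ∀ t, ‖w t‖ ≤ r} with hS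
  have hSc : IsClosed S := by
    have hev : ∀ t : ℝ, Continuous fun w : BoundedContinuousFunction ℝ E => w t := fun t =>
      (BoundedContinuousFunction.lipschitz_eval_const t).continuous
    have : S = (⋂ t : ℝ, {w | w (t + T) = w t}) ∩ ⋂ t : ℝ, {w | ‖w t‖ ≤ r} := by
      ext w; simp [hS, Function.Periodic]
    rw [this]
    exact (isClosed_iInter fun t => isClosed_eq (hev _) (hev _)).inter
      (isClosed_iInter fun t => isClosed_le (hev t).norm continuous_const)
  have hfix : ∀ lam ∈ Icc 0 δ, ∃ w ∈ S, ∀ t, HasDerivAt (fun t => w t)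
      (a t • A (w t) + b lam t (w t)) t := by
    intro lam hl
    have hN : ∀ x : BoundedContinuousFunction ℝ E, ∃ w : BoundedContinuousFunction ℝ E, x ∈ S →
        w ∈ S ∧ ∀ t, HasDerivAt (fun t => w t) (a t • A (w t) + b lam t (x t)) t := by
      intro x
      by_cases hx : x ∈ S
      swap
      · exact ⟨0, fun h => absurd h hx⟩
      obtain ⟨w, hwT, hw⟩ := hex _ (hbcont lam x x.continuous hx.2) (hbper lam x hx.1 hx.2)
      have hwr : ∀ t, ‖w t‖ ≤ r := by
        intro t
        have := hdiff lam hl 0 h0mem x (fun _ => 0) w (fun _ => 0) r hx.2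
          (fun _ => by simpa using hr0.le) (fun t => by simpa using hx.2 t) hwT (fun _ => rfl)
          hw hzero t
        rw [sub_zero, sub_zero, abs_of_nonneg hl.1] at this
        linarith [hCM lam hl]
      refine ⟨BoundedContinuousFunction.ofNormedAddCommGroup w
        (continuous_iff_continuousAt.2 fun t => (hw t).continuousAt) r hwr, fun _ => ?_⟩
      exact ⟨⟨hwT, hwr⟩, hw⟩
    choose N hN using hN
    have hmaps : MapsTo N S S := fun x hx => (hN x hx).1
    have hcontr : ContractingWith (1 / 2) (hmaps.restrict N S S) := by
      refine ⟨by norm_num, LipschitzWith.of_dist_le_mul fun x y => ?_⟩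
      have hxy := hdiff lam hl lam hl x.1 y.1 (N x) (N y) (dist x.1 y.1) x.2.2 y.2.2
        (fun t => by rw [← dist_eq_norm]; exact BoundedContinuousFunction.dist_coe_le_dist t)
        (hN x x.2).1.1 (hN y y.2).1.1 (hN x x.2).2 (hN y y.2).2
      refine (BoundedContinuousFunction.dist_le (by positivity)).2 fun t => ?_
      have := hxy t
      rw [sub_self, abs_zero, zero_mul, mul_zero, add_zero, ← dist_eq_norm] at this
      refine this.trans (le_of_eq ?_)
      rw [Subtype.dist_eq]; push_cast; ring
    obtain ⟨w, hwS, hw, -⟩ := hcontr.exists_fixedPoint' hSc.isComplete hmaps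
      (x := 0) ⟨fun _ => rfl, fun _ => by simpa using hr0.le⟩ (edist_ne_top _ _)
    refine ⟨w, hwS, ?_⟩
    have := (hN w hwS).2
    rwa [hw.eq] at this
  refine ⟨r, hr0, hrρ₀, ?_, δ, hδ0, 2 * (C * (M + K * r)), by positivity, ?_⟩
  · intro x hxT hx hxd
    have hbdd : BddAbove (range fun t => ‖x t‖) := ⟨r, by rintro _ ⟨t, rfl⟩; exact hx t⟩
    have hD : (⨆ t, ‖x t‖) ≤ (⨆ t, ‖x t‖) / 2 := by
      refine ciSup_le fun t => ?_
      have := hdiff 0 h0mem 0 h0mem x (fun _ => 0) x (fun _ => 0) (⨆ t, ‖x t‖) hx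
        (fun _ => by simpa using hr0.le) (fun t => by simpa using le_ciSup hbdd t) hxT
        (fun _ => rfl) (fun t => by simpa [hb, smul_add] using hxd t) hzero t
      simpa using this
    intro t
    have h1 := le_ciSup hbdd t
    have h2 := norm_nonneg (x t)
    exact norm_le_zero_iff.1 (by linarith)
  · choose! c hcS hc using hfix
    refine ⟨fun lam t => c lam t, fun lam hl => ⟨(hcS lam hl).1, (hcS lam hl).2, fun t => ?_⟩, ?_⟩
    · convert! hc lam hl t using 1
      simp only [hb, smul_add]; abel
    · intro lam hl mu hmu t
      have h1 := hdiff lam hl mu hmu (c lam) (c mu) (c lam) (c mu) (dist (c lam) (c mu))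
        (hcS lam hl).2 (hcS mu hmu).2
        (fun t => by rw [← dist_eq_norm]; exact BoundedContinuousFunction.dist_coe_le_dist t)
        (hcS lam hl).1 (hcS mu hmu).1 (hc lam hl) (hc mu hmu)
      have h2 : dist (c lam) (c mu)
          ≤ dist (c lam) (c mu) / 2 + C * (|lam - mu| * (M + K * r)) :=
        (BoundedContinuousFunction.dist_le (by positivity)).2 fun t => by
          rw [dist_eq_norm]; exact h1 t
      have h3 := BoundedContinuousFunction.dist_coe_le_dist (f := c lam) (g := c mu) t
      rw [dist_eq_norm] at h3
      linarith

end Branch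

/-! ### Reduction of the differential-algebraic equation to an ordinary one -/

section Reduction

open Set Metric Topology

/-- Implicit function theorem at a zero `z₀` of `g` with `∂₂g(z₀)` invertible: the zero set of `g`
near `z₀` is the graph of a `C¹` function, parametrized by `G x = (x, ψ x)`. The derivative of
`f ∘ G` at the base point is the linearization `PhiMap f g z₀`. -/
lemma exists_graphMap {k s : ℕ} {g : (Fin k → ℝ) × (Fin s → ℝ) → (Fin s → ℝ)}
    {z₀ : (Fin k → ℝ) × (Fin s → ℝ)} (hg : ContDiffAt ℝ 1 g z₀) (hinv : IsUnit (pd2 g z₀))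
    (hg0 : g z₀ = 0) (f : (Fin k → ℝ) × (Fin s → ℝ) → (Fin k → ℝ)) :
    ∃ (G : (Fin k → ℝ) → (Fin k → ℝ) × (Fin s → ℝ))
      (G' : (Fin k → ℝ) →L[ℝ] (Fin k → ℝ) × (Fin s → ℝ)),
      G z₀.1 = z₀ ∧ (∀ x, (G x).1 = x) ∧ HasStrictFDerivAt G G' z₀.1 ∧
      (∀ᶠ x in 𝓝 z₀.1, g (G x) = 0 ∧ ContDiffAt ℝ 1 G x) ∧
      (∀ᶠ v in 𝓝 z₀, g v = 0 → G v.1 = v) ∧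
      (fderiv ℝ f z₀).comp G' = PhiMap f g z₀ := by
  have hinv' : (fderiv ℝ g z₀ ∘L .inr ℝ (Fin k → ℝ) (Fin s → ℝ)).IsInvertible := by
    obtain ⟨e, he⟩ := hinv
    exact ⟨ContinuousLinearEquiv.unitsEquiv ℝ _ e, by ext1 v; rw [← pd2, ← he]; rfl⟩
  set ψ := hg.implicitFunction one_ne_zero hinv' with hψ
  have hψC : ContDiffAt ℝ 1 ψ z₀.1 := hg.contDiffAt_implicitFunction one_ne_zero hinv'
  have hGC : ContDiffAt ℝ 1 (fun x => (x, ψ x)) z₀.1 := contDiffAt_id.prodMk hψC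
  refine ⟨fun x => (x, ψ x), _, ?_, fun _ => rfl, (hasStrictFDerivAt_id _).prodMk
    (hg.hasStrictFDerivAt_implicitFunction one_ne_zero hinv'), ?_, ?_, ?_⟩
  · exact Prod.ext rfl (hg.implicitFunction_apply_self one_ne_zero hinv')
  · filter_upwards [hg.eventually_apply_implicitFunction one_ne_zero hinv',
      hGC.eventually (by simp)] with x h1 h2
    exact ⟨h1.trans hg0, h2⟩
  · filter_upwards [hg.eventually_apply_eq_iff_implicitFunction one_ne_zero hinv'] with v hv h0
    exact Prod.ext rfl (hv.1 (h0.trans hg0.symm))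
  · have h1 : ∀ v : (Fin k → ℝ) × (Fin s → ℝ), fderiv ℝ f z₀ v
        = fderiv ℝ f z₀ (v.1, 0) + fderiv ℝ f z₀ (0, v.2) := fun v => by
      rw [← map_add]; simp
    ext1 v
    rw [PhiMap, ContinuousLinearMap.ringInverse_eq_inverse, ContinuousLinearMap.comp_apply, h1]
    simp only [pd1, pd2, ContinuousLinearMap.comp_apply, ContinuousLinearMap.inl_apply,
      ContinuousLinearMap.prod_apply, neg_apply, ContinuousLinearMap.id_apply, sub_eq_add_neg]
    simp
    rw [← map_neg (fderiv ℝ f z₀), Prod.neg_mk, neg_zero]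

/-- By compactness of a period, the local Lipschitz condition on `h` near `z₀` holds with the same
neighbourhood and the same constant for all times. -/
lemma exists_uniform_lipschitz {Z W : Type*} [PseudoMetricSpace Z] [PseudoMetricSpace W]
    {U : Set Z} (hU : IsOpen U) {T : ℝ} (hT : 0 < T) {h : ℝ × Z → W}
    (hhT : ∀ t : ℝ, ∀ z ∈ U, h (t + T, z) = h (t, z)) {z₀ : Z} (hz₀ : z₀ ∈ U)
    (hhlip : ∀ t₀ : ℝ, ∃ ε > (0:ℝ), ∃ K : NNReal, ∀ t : ℝ, |t - t₀| < ε →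
      LipschitzOnWith K (fun z => h (t, z)) (ball z₀ ε ∩ U)) :
    ∃ ε > (0:ℝ), ball z₀ ε ⊆ U ∧ ∃ K : NNReal, ∀ t : ℝ,
      LipschitzOnWith K (fun z => h (t, z)) (ball z₀ ε) := by
  obtain ⟨ε, hε, K, hK⟩ : ∃ ε > (0:ℝ), ∃ K : NNReal, ∀ t ∈ Icc 0 T,
      LipschitzOnWith K (fun z => h (t, z)) (ball z₀ ε ∩ U) := by
    refine isCompact_Icc.induction_on ⟨1, one_pos, 0, fun t ht => absurd ht (notMem_empty t)⟩ ?_ ?_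
      (fun t₀ _ => ?_)
    · rintro s t hst ⟨ε, hε, K, hK⟩
      exact ⟨ε, hε, K, fun τ hτ => hK τ (hst hτ)⟩
    · rintro s t ⟨ε, hε, K, hK⟩ ⟨ε', hε', K', hK'⟩
      refine ⟨min ε ε', lt_min hε hε', max K K', fun τ hτ => ?_⟩
      rcases hτ with hτ | hτ
      · exact ((hK τ hτ).mono (inter_subset_inter_left _ (ball_subset_ball (min_le_left _ _)))).weaken
          (le_max_left _ _)
      · exact ((hK' τ hτ).mono
          (inter_subset_inter_left _ (ball_subset_ball (min_le_right _ _)))).weaken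
          (le_max_right _ _)
    · obtain ⟨ε, hε, K, hK⟩ := hhlip t₀
      exact ⟨ball t₀ ε, mem_nhdsWithin_of_mem_nhds (ball_mem_nhds _ hε), ε, hε, K,
        fun t ht => hK t (by rwa [mem_ball, Real.dist_eq] at ht)⟩
  obtain ⟨η, hη, hηU⟩ := Metric.isOpen_iff.1 hU z₀ hz₀
  refine ⟨min ε η, lt_min hε hη, (ball_subset_ball (min_le_right _ _)).trans hηU, K, fun t => ?_⟩
  have hsub : ball z₀ (min ε η) ⊆ ball z₀ ε ∩ U := fun z hz =>
    ⟨ball_subset_ball (min_le_left _ _) hz, hηU (ball_subset_ball (min_le_right _ _) hz)⟩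
  obtain ⟨y, hy, hty⟩ := Function.Periodic.exists_mem_Ico₀
    (f := fun t => fun z : U => h (t, z)) (fun t => funext fun z => hhT t z z.2) hT t
  have heq : EqOn (fun z => h (t, z)) (fun z => h (y, z)) (ball z₀ (min ε η)) := fun z hz =>
    congrFun hty ⟨z, (hsub hz).2⟩
  intro z hz z' hz'
  rw [heq hz, heq hz']
  exact (hK y ⟨hy.1, hy.2.le⟩).mono hsub hz hz'

lemma hasDerivAt_fst_comp {X Y : Type*} [NormedAddCommGroup X] [NormedSpace ℝ X]
    [NormedAddCommGroup Y] [NormedSpace ℝ Y] {v : ℝ → X × Y} {v' : X × Y} {t : ℝ}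
    (hv : HasDerivAt v v' t) : HasDerivAt (fun t => (v t).1) v'.1 t :=
  (ContinuousLinearMap.fst ℝ X Y).hasFDerivAt.comp_hasDerivAt t hv

end Reduction

/-! ### The ejecting point -/

/-- A non-`T`-resonant zero of `F`, regarded as the trivial `T`-periodic pair
`(0,(p̄₀,q̄₀))`, is an ejecting point for the set `X` of `T`-periodic pairs of the DAE. -/
theorem stmt16 {k s : ℕ}
    (U : Set ((Fin k → ℝ) × (Fin s → ℝ))) (hUopen : IsOpen U) (hUconn : IsConnected U)
    (g : (Fin k → ℝ) × (Fin s → ℝ) → (Fin s → ℝ)) (hg : ContDiffOn ℝ (⊤ : ℕ∞) g U)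
    (hinv : ∀ z ∈ U, IsUnit (pd2 g z))
    (f : (Fin k → ℝ) × (Fin s → ℝ) → (Fin k → ℝ)) (hf : ContDiffOn ℝ 1 f U)
    (T : ℝ) (hT : 0 < T)
    (a : ℝ → ℝ) (ha : Continuous a) (haT : Function.Periodic a T)
    (havg : (1 / T) * ∫ t in (0:ℝ)..T, a t = 1)
    (h : ℝ × ((Fin k → ℝ) × (Fin s → ℝ)) → (Fin k → ℝ))
    (hh : ContinuousOn h (Set.univ ×ˢ U))
    (hhT : ∀ (t : ℝ), ∀ z ∈ U, h (t + T, z) = h (t, z))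
    (hhlip : ∀ (t₀ : ℝ), ∀ z₀ ∈ U, ∃ ε > (0:ℝ), ∃ K : NNReal,
      ∀ t : ℝ, |t - t₀| < ε →
        LipschitzOnWith K (fun z => h (t, z)) (Metric.ball z₀ ε ∩ U))
    (z₀ : (Fin k → ℝ) × (Fin s → ℝ)) (hz₀ : z₀ ∈ U)
    (hF0 : f z₀ = 0 ∧ g z₀ = 0)
    (hres : ¬ ∃ ξ : ℝ → (Fin k → ℝ),
        (∀ t : ℝ, HasDerivAt ξ (a t • PhiMap f g z₀ (ξ t)) t) ∧
        Function.Periodic ξ T ∧ ξ ≠ 0) :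
    (∃ V : Set (BoundedContinuousFunction ℝ ((Fin k → ℝ) × (Fin s → ℝ))),
      IsOpen V ∧
      V ∩ {u | ((0:ℝ), u) ∈ TPairs U g f a h T} =
        {BoundedContinuousFunction.const ℝ z₀}) ∧
    (∃ Γ : Set (ℝ × BoundedContinuousFunction ℝ ((Fin k → ℝ) × (Fin s → ℝ))),
      Γ ⊆ TPairs U g f a h T ∧ IsPreconnected Γ ∧
      ((0:ℝ), BoundedContinuousFunction.const ℝ z₀) ∈ Γ ∧
      ¬ (Γ ⊆ {P | P.1 = 0})) := by
  obtain ⟨hf0, hg0⟩ := hF0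
  have hUz : U ∈ nhds z₀ := hUopen.mem_nhds hz₀
  obtain ⟨G, G', hGz, hGfst, hG', hGev, hGuniq, hPhi⟩ := exists_graphMap
    ((hg.contDiffAt hUz).of_le (by exact_mod_cast le_top)) (hinv z₀ hz₀) hg0 f
  obtain ⟨ε, hε, hεU, K, hK⟩ := exists_uniform_lipschitz hUopen hT hhT hz₀
    (fun t₀ => hhlip t₀ z₀ hz₀)
  obtain ⟨KG, sG, hsG, hKG⟩ := hG'.exists_lipschitzOnWith
  set A := PhiMap f g z₀ with hA
  have hF' : HasStrictFDerivAt (fun x => f (G x)) A z₀.1 := by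
    have hfd : HasStrictFDerivAt f (fderiv ℝ f z₀) (G z₀.1) := by
      rw [hGz]; exact (hf.contDiffAt hUz).hasStrictFDerivAt one_ne_zero
    rw [← hPhi]
    exact hfd.comp z₀.1 hG'
  have hGball : ∀ᶠ x in nhds z₀.1, G x ∈ Metric.ball z₀ ε := by
    refine hG'.continuousAt.eventually ?_
    rw [hGz]
    exact Metric.ball_mem_nhds _ hε
  -- `ρ₀` is a radius on which all the local properties of the graph map `G` hold.
  obtain ⟨ρ₀, hρ₀, hρ⟩ := Metric.nhds_basis_closedBall.eventually_iff.1
    ((hGev.and hGball).and hsG)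
  have hρ' : ∀ w, ‖w‖ ≤ ρ₀ → ((g (G (z₀.1 + w)) = 0 ∧ ContDiffAt ℝ 1 G (z₀.1 + w)) ∧
      G (z₀.1 + w) ∈ Metric.ball z₀ ε) ∧ z₀.1 + w ∈ sG := fun w hw =>
    hρ (by simpa using hw)
  set R : (Fin k → ℝ) → (Fin k → ℝ) := fun w => f (G (z₀.1 + w)) - A w with hR
  set H : ℝ → (Fin k → ℝ) → (Fin k → ℝ) := fun t w => h (t, G (z₀.1 + w)) with hH
  have hAR : ∀ w, A w + R w = f (G (z₀.1 + w)) := fun w => by simp [hR]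
  have hR0 : R 0 = 0 := by simp [hR, hGz, hf0]
  have hRsmall : ∀ ε > (0:ℝ), ∃ ρ > (0:ℝ), ∀ x y, ‖x‖ ≤ ρ → ‖y‖ ≤ ρ →
      ‖R x - R y‖ ≤ ε * ‖x - y‖ := by
    intro ε hε
    obtain ⟨s, hs, hsA⟩ := hF'.approximates_deriv_on_nhds (c := ⟨ε, hε.le⟩) (Or.inr hε)
    obtain ⟨ρ, hρ, hρs⟩ := Metric.nhds_basis_closedBall.mem_iff.1 hs
    refine ⟨ρ, hρ, fun x y hx hy => ?_⟩
    have h1 := hsA _ (hρs (by simpa using hx : z₀.1 + x ∈ Metric.closedBall z₀.1 ρ))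
      _ (hρs (by simpa using hy : z₀.1 + y ∈ Metric.closedBall z₀.1 ρ))
    have h2 : z₀.1 + x - (z₀.1 + y) = x - y := by abel
    rw [h2] at h1
    have h3 : R x - R y = f (G (z₀.1 + x)) - f (G (z₀.1 + y)) - A (x - y) := by
      simp only [hR, map_sub]; abel
    rw [h3]
    exact h1
  have hGlip : ∀ x y, ‖x‖ ≤ ρ₀ → ‖y‖ ≤ ρ₀ →
      dist (G (z₀.1 + x)) (G (z₀.1 + y)) ≤ KG * ‖x - y‖ := by
    intro x y hx hy
    have h1 := hKG.dist_le_mul _ (hρ' x hx).2 _ (hρ' y hy).2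
    rwa [dist_add_left, dist_eq_norm x] at h1
  have hHc : ContinuousOn (fun p : ℝ × (Fin k → ℝ) => H p.1 p.2)
      (Set.univ ×ˢ Metric.closedBall 0 ρ₀) := by
    refine hh.comp (f := fun p : ℝ × (Fin k → ℝ) => (p.1, G (z₀.1 + p.2))) ?_ ?_
    · intro p hp
      have h1 := (hρ' p.2 (by simpa using hp.2)).1.1.2.continuousAt
      have h2 : ContinuousAt (fun p : ℝ × (Fin k → ℝ) => G (z₀.1 + p.2)) p :=
        ContinuousAt.comp (f := fun p : ℝ × (Fin k → ℝ) => z₀.1 + p.2) h1 (by fun_prop)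
      exact (continuousAt_fst.prodMk h2).continuousWithinAt
    · intro p hp
      exact ⟨trivial, hεU (hρ' p.2 (by simpa using hp.2)).1.2⟩
  obtain ⟨M, hM⟩ : ∃ M, ∀ t, ‖H t 0‖ ≤ M := by
    have hper : Function.Periodic (fun t => H t 0) T := fun t => by
      simp only [hH, add_zero, hGz, hhT t z₀ hz₀]
    have hc : Continuous fun t => H t 0 :=
      hHc.comp_continuous (continuous_id.prodMk continuous_const)
        fun t => ⟨trivial, by simpa using hρ₀.le⟩
    obtain ⟨M, hM⟩ := (isCompact_Icc (a := (0:ℝ)) (b := T)).exists_bound_of_continuousOn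
      hc.continuousOn
    refine ⟨M, fun t => ?_⟩
    obtain ⟨y, hy, hty⟩ := hper.exists_mem_Ico₀ hT t
    rw [hty]
    exact hM y ⟨hy.1, hy.2.le⟩
  obtain ⟨r, hr, hrρ₀, huniq, δ, hδ, L, hL, c, hc, hcL⟩ := exists_branch A a ha hT haT hres R hR0
    hRsmall H (K := K * KG) hρ₀ (by positivity) hHc
    (fun t x hx => hhT t _ (hεU (hρ' x hx).1.2))
    (fun t x y hx hy => by
      have h1 := (hK t).dist_le_mul _ (hρ' x hx).1.2 _ (hρ' y hy).1.2
      rw [← dist_eq_norm, mul_assoc]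
      exact h1.trans (mul_le_mul_of_nonneg_left (hGlip x y hx hy) K.2))
    hM
  have hcρ₀ : ∀ lam ∈ Set.Icc 0 δ, ∀ t, ‖c lam t‖ ≤ ρ₀ := fun lam hl t =>
    ((hc lam hl).2.1 t).trans hrρ₀
  constructor
  · obtain ⟨η, hη, hηs⟩ := Metric.nhds_basis_ball.eventually_iff.1 hGuniq
    refine ⟨Metric.ball (BoundedContinuousFunction.const ℝ z₀) (min η r), Metric.isOpen_ball, ?_⟩
    ext u
    constructor
    · rintro ⟨hu, -, hper, hU, u', -, hder, hsol⟩
      have hdist : ∀ t, dist (u t) z₀ < min η r := fun t =>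
        (BoundedContinuousFunction.dist_coe_le_dist
          (g := BoundedContinuousFunction.const ℝ z₀) t).trans_lt hu
      have hGu : ∀ t, G (u t).1 = u t := fun t =>
        hηs ((hdist t).trans_le (min_le_left _ _)) (hsol t).2
      have hw : ∀ t, (u t).1 - z₀.1 = 0 := by
        refine huniq (fun t => (u t).1 - z₀.1) (fun t => ?_) (fun t => ?_) (fun t => ?_)
        · have := hper t
          simp only at this
          simp only [this]
        · rw [← dist_eq_norm]
          exact (le_max_left _ _).trans ((hdist t).le.trans (min_le_right _ _))
        · rw [hAR, add_sub_cancel, hGu]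
          have h1 := (hasDerivAt_fst_comp (hder t)).sub_const z₀.1
          rw [(hsol t).1, zero_smul, add_zero] at h1
          exact h1
      ext1 t
      rw [← hGu t, sub_eq_zero.1 (hw t), hGz]
      rfl
    · rintro rfl
      refine ⟨Metric.mem_ball_self (lt_min hη hr), le_rfl, fun _ => rfl, fun _ => hz₀,
        fun _ => 0, continuous_const, fun t => hasDerivAt_const t z₀, fun t => ⟨?_, hg0⟩⟩
      simp [hf0]
  · have hxd : ∀ lam ∈ Set.Icc 0 δ, ∀ t, HasDerivAt (fun t => z₀.1 + c lam t)
        (a t • f (G (z₀.1 + c lam t)) + lam • h (t, G (z₀.1 + c lam t))) t := by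
      intro lam hl t
      have h1 := ((hc lam hl).2.2 t).const_add z₀.1
      rwa [hAR] at h1
    have hud : ∀ lam ∈ Set.Icc 0 δ, ∀ t, HasDerivAt (fun t => G (z₀.1 + c lam t))
        (fderiv ℝ G (z₀.1 + c lam t)
          (a t • f (G (z₀.1 + c lam t)) + lam • h (t, G (z₀.1 + c lam t)))) t := by
      intro lam hl t
      have h1 := ((hρ' _ (hcρ₀ lam hl t)).1.1.2.differentiableAt one_ne_zero).hasFDerivAt
      exact h1.comp_hasDerivAt t (hxd lam hl t)
    have hxc : ∀ lam ∈ Set.Icc 0 δ, Continuous fun t => z₀.1 + c lam t := fun lam hl =>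
      continuous_iff_continuousAt.2 fun t => (hxd lam hl t).continuousAt
    have huc : ∀ lam ∈ Set.Icc 0 δ, Continuous fun t => G (z₀.1 + c lam t) := fun lam hl =>
      continuous_iff_continuousAt.2 fun t => (hud lam hl t).continuousAt
    have huU : ∀ lam ∈ Set.Icc 0 δ, ∀ t, G (z₀.1 + c lam t) ∈ U := fun lam hl t =>
      hεU (hρ' _ (hcρ₀ lam hl t)).1.2
    have hbcf : ∀ lam ∈ Set.Icc 0 δ,
        ∃ u : BoundedContinuousFunction ℝ ((Fin k → ℝ) × (Fin s → ℝ)),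
          ∀ t, u t = G (z₀.1 + c lam t) := by
      intro lam hl
      refine ⟨BoundedContinuousFunction.ofNormedAddCommGroup _ (huc lam hl) (‖z₀‖ + ε)
        fun t => ?_, fun t => rfl⟩
      have h1 := (hρ' _ (hcρ₀ lam hl t)).1.2
      rw [Metric.mem_ball, dist_eq_norm] at h1
      have h2 := norm_add_le z₀ (G (z₀.1 + c lam t) - z₀)
      rw [add_sub_cancel] at h2
      linarith
    choose! u hu using hbcf
    have h0mem : (0:ℝ) ∈ Set.Icc 0 δ := ⟨le_rfl, hδ.le⟩
    have hu0 : u 0 = BoundedContinuousFunction.const ℝ z₀ := by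
      have hc0 : ∀ t, c 0 t = 0 := huniq (c 0) (hc 0 h0mem).1 (hc 0 h0mem).2.1
        (fun t => by simpa using (hc 0 h0mem).2.2 t)
      ext1 t
      rw [hu 0 h0mem, hc0, add_zero, hGz]
      rfl
    have hulip : LipschitzOnWith (KG * L.toNNReal) u (Set.Icc 0 δ) := by
      refine LipschitzOnWith.of_dist_le_mul fun lam hl mu hmu => ?_
      refine (BoundedContinuousFunction.dist_le (by positivity)).2 fun t => ?_
      rw [hu lam hl, hu mu hmu, NNReal.coe_mul, Real.coe_toNNReal _ hL, mul_assoc, Real.dist_eq]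
      exact (hGlip _ _ (hcρ₀ lam hl t) (hcρ₀ mu hmu t)).trans
        (mul_le_mul_of_nonneg_left (hcL lam hl mu hmu t) KG.2)
    refine ⟨(fun lam => (lam, u lam)) '' Set.Icc 0 δ, ?_, ?_, ⟨0, h0mem, by simp only [hu0]⟩, ?_⟩
    · rintro _ ⟨lam, hl, rfl⟩
      have hfun : (fun t => u lam t) = fun t => G (z₀.1 + c lam t) := funext (hu lam hl)
      refine ⟨hl.1, ?_, fun t => ?_,
        fun t => fderiv ℝ G (z₀.1 + c lam t)
          (a t • f (G (z₀.1 + c lam t)) + lam • h (t, G (z₀.1 + c lam t))),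
        ?_, fun t => ?_, fun t => ⟨?_, ?_⟩⟩
      · show Function.Periodic (fun t => u lam t) T
        rw [hfun]
        intro t
        simp only [(hc lam hl).1 t]
      · show u lam t ∈ U
        rw [hu lam hl]
        exact huU lam hl t
      · refine Continuous.clm_apply ?_ ?_
        · refine continuous_iff_continuousAt.2 fun t => ?_
          have h1 : ContinuousAt (fderiv ℝ G) (z₀.1 + c lam t) :=
            ((hρ' _ (hcρ₀ lam hl t)).1.1.2.fderiv_right (m := 0) (by simp)).continuousAt
          exact ContinuousAt.comp (f := fun t => z₀.1 + c lam t) h1 (hxc lam hl).continuousAt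
        · refine (ha.smul (hf.continuousOn.comp_continuous (huc lam hl) (huU lam hl))).add
            (Continuous.const_smul ?_ lam)
          exact hh.comp_continuous (continuous_id.prodMk (huc lam hl))
            fun t => ⟨trivial, huU lam hl t⟩
      · show HasDerivAt (fun t => u lam t) _ t
        rw [hfun]
        exact hud lam hl t
      · -- The first component of `G` is the identity, so both sides differentiate `z₀.1 + c lam`.
        have h1 := hasDerivAt_fst_comp (hud lam hl t)
        simp only [hGfst] at h1
        show _ = a t • f (u lam t) + lam • h (t, u lam t)
        rw [hu lam hl]
        exact h1.unique (hxd lam hl t)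
      · show g (u lam t) = 0
        rw [hu lam hl]
        exact (hρ' _ (hcρ₀ lam hl t)).1.1.1
    · exact isPreconnected_Icc.image _ (continuousOn_id.prodMk hulip.continuousOn)
    · intro hsub
      exact hδ.ne' (hsub ⟨δ, ⟨hδ.le, le_rfl⟩, rfl⟩)
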